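/- (Eqs. (4.12)/(4.14).) Under the stated hypotheses, the following pointwise identity holds on ℝ⁴: (F + f)·(F̄ + f̄) = (f f̄)⁻¹ · Y·Ȳ · (A Y + B) · (Ā Ȳ + B̄) = f f̄ · 𝒜 · 𝒜̄, where 𝒜 := (f f̄)⁻¹ Ȳ (A Y + B) and 𝒜̄ := (f f̄)⁻¹ Y (Ā Ȳ + B̄). That is, in the product (F+f)(F̄+f̄) = (X X̄/(F F̄))·(A X + B)·(Ā X̄ + B̄) obtained from the equations of motion, only the lowest-order values X → Y, F → −f contribute. -/

import Mathlib

open scoped BigOperators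

/-- Partial derivative of a `Λ`-valued function on `ℝ⁴` in the `i`-th coordinate
direction. -/
noncomputable def pd {Λ : Type*} [NormedAddCommGroup Λ] [NormedSpace ℝ Λ]
    (i : Fin 4) (u : (Fin 4 → ℝ) → Λ) : (Fin 4 → ℝ) → Λ :=
  fun x => fderiv ℝ u x (Pi.single i 1)

/-- The second-order kinetic operator
`A u = e⁻¹ ∂_μ (e g^{μν} ∂_ν u) + i t^μ ∂_μ u + (i/2) e⁻¹ ∂_μ (e t^μ) u + r u`
of eq. (4.2). The conjugate operator `Ā` is `Aop e g (-t) r`. -/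
noncomputable def Aop {Λ : Type*} [NormedCommRing Λ] [NormedAlgebra ℂ Λ]
    (e : (Fin 4 → ℝ) → ℝ) (g : (Fin 4 → ℝ) → Fin 4 → Fin 4 → ℝ)
    (t : (Fin 4 → ℝ) → Fin 4 → ℝ) (r : (Fin 4 → ℝ) → ℝ)
    (u : (Fin 4 → ℝ) → Λ) : (Fin 4 → ℝ) → Λ :=
  fun x =>
    (e x)⁻¹ • (∑ μ : Fin 4, pd μ (fun y => e y • ∑ ν : Fin 4, g y μ ν • pd ν u y) x)
      + Complex.I • (∑ μ : Fin 4, t x μ • pd μ u x)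
      + ((2 : ℝ)⁻¹ * (e x)⁻¹ *
          ∑ μ : Fin 4, fderiv ℝ (fun y => e y * t y μ) x (Pi.single μ 1)) •
          (Complex.I • u x)
      + r x • u x

/-!
The equations of motion make `c̄` divide `F + f` and `c` divide `F̄ + f̄`. Hence `c̄ F⁻² = c̄ f⁻²`
and `c F̄⁻² = c f̄⁻²`, and `c c̄` divides `X - Y` and `X̄ - Ȳ`. The product `(F + f)(F̄ + f̄)`
carries the prefactor `c c̄`, so it remains to see that `c c̄ A w = 0` for a second-order operator
`A` and any multiple `w` of `c c̄`: differentiating `c² = 0` gives `c ∂c = 0`, so `c` and `c̄` each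
annihilate `∂w`, and differentiating `c ∂w = 0` once more gives `c c̄ ∂∂w = 0`.
-/

open scoped Ring Topology

section RingInverse

lemma map_ringInverse_of_isUnit {F M N : Type*} [MonoidWithZero M] [MonoidWithZero N]
    [FunLike F M N] [MonoidHomClass F M N] (φ : F) {a : M} (ha : IsUnit a) :
    φ a⁻¹ʳ = (φ a)⁻¹ʳ := by
  obtain ⟨u, rfl⟩ := ha
  rw [Ring.inverse_unit]
  exact (Ring.inverse_unit (Units.map (φ : M →* N) u)).symm

lemma continuousOn_ringInverse {R : Type*} [NormedRing R] :
    ContinuousOn (Ring.inverse : R → R) {a | IsUnit a} := by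
  let ι : R →+* UniformSpace.Completion R := UniformSpace.Completion.coeRingHom
  have hι : Topology.IsInducing ι := (UniformSpace.Completion.isUniformInducing_coe R).isInducing
  have inverse_comp_ι : ContinuousOn (fun a ↦ (ι a)⁻¹ʳ) {a | IsUnit a} := by
    intro a ha
    have hι_inv : ContinuousAt Ring.inverse (ι a) :=
      NormedRing.inverse_continuousAt (ha.map ι).unit
    exact (hι_inv.comp hι.continuous.continuousAt).continuousWithinAt
  exact hι.continuousOn_iff.2
    (inverse_comp_ι.congr fun _ ha ↦ map_ringInverse_of_isUnit ι ha)

variable (𝕜 : Type*) {R : Type*} [NontriviallyNormedField 𝕜] [NormedRing R] [NormedAlgebra 𝕜 R]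

lemma hasFDerivWithinAt_ringInverse {a : R} (ha : IsUnit a) :
    HasFDerivWithinAt Ring.inverse (-ContinuousLinearMap.mulLeftRight 𝕜 R a⁻¹ʳ a⁻¹ʳ)
      {b | IsUnit b} a := by
  have inverse_sub : (fun b ↦ a⁻¹ʳ - b⁻¹ʳ) =o[𝓝[{b | IsUnit b}] a] (1 : R → ℝ) :=
    (Asymptotics.isLittleO_one_iff ℝ).2 <| by
      simpa using (continuousOn_ringInverse a ha).tendsto.const_sub a⁻¹ʳ
  have sub_mul_inverse :
      (fun b ↦ (b - a) * a⁻¹ʳ) =O[𝓝[{b | IsUnit b}] a] (fun b ↦ ‖b - a‖) :=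
    .of_bound ‖a⁻¹ʳ‖ (.of_forall fun b ↦ by
      simpa [mul_comm ‖a⁻¹ʳ‖] using norm_mul_le (b - a) a⁻¹ʳ)
  have remainder := inverse_sub.mul_isBigO sub_mul_inverse
  simp only [Pi.one_apply, one_mul] at remainder
  rw [hasFDerivWithinAt_iff_isLittleO]
  refine remainder.of_norm_right.congr' ?_ .rfl
  filter_upwards [self_mem_nhdsWithin] with b hb
  rw [Ring.inverse_sub_inverse (iff_of_true hb ha), neg_apply,
    ContinuousLinearMap.mulLeftRight_apply]
  noncomm_ring

-- `{a | IsUnit a}` need not be open when `R` is not complete, so the induction runs on derivatives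
-- within this set, which are not assumed to be unique.
lemma contDiffOn_ringInverse (n : ℕ∞) :
    ContDiffOn 𝕜 n (Ring.inverse : R → R) {a | IsUnit a} := by
  suffices ∀ m : ℕ, ContDiffOn 𝕜 m (Ring.inverse : R → R) {a | IsUnit a} from
    contDiffOn_iff_forall_nat_le.2 fun m _ ↦ this m
  intro m
  induction m with
  | zero => exact contDiffOn_zero.2 continuousOn_ringInverse
  | succ m ih =>
    have contDiffOn_deriv : ContDiffOn 𝕜 m
        (fun a : R ↦ -ContinuousLinearMap.mulLeftRight 𝕜 R a⁻¹ʳ a⁻¹ʳ) {a | IsUnit a} :=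
      ((ContinuousLinearMap.mulLeftRight_isBoundedBilinear 𝕜 R).contDiff.comp_contDiffOn
        (ih.prodMk ih)).neg
    rw [Nat.cast_add, Nat.cast_one, contDiffOn_succ_iff_hasFDerivWithinAt (by simp)]
    intro a ha
    refine ⟨{b | IsUnit b}, ?_, by simp, _,
      fun b hb ↦ hasFDerivWithinAt_ringInverse 𝕜 hb, contDiffOn_deriv⟩
    rw [Set.insert_eq_of_mem ha]
    exact self_mem_nhdsWithin

variable {𝕜} {E : Type*} [NormedAddCommGroup E] [NormedSpace 𝕜 E]

lemma contDiff_smul_mul_ringInverse {n : ℕ∞} {p q : E → R} (k : 𝕜) (hp : ContDiff 𝕜 n p)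
    (hq : ContDiff 𝕜 n q) (hqU : ∀ x, IsUnit (q x)) :
    ContDiff 𝕜 n fun x ↦ k • (p x * (q x)⁻¹ʳ) :=
  (hp.mul ((contDiffOn_ringInverse 𝕜 n).comp_contDiff hq hqU)).const_smul k

end RingInverse

section Divisibility

variable {R : Type*} [CommRing R] {p q a b : R}

lemma dvd_ringInverse_add_ringInverse (ha : IsUnit a) (hb : IsUnit b) (h : p ∣ a + b) :
    p ∣ a⁻¹ʳ + b⁻¹ʳ := by
  rw [Ring.inverse_add_inverse (iff_of_true ha hb)]
  exact (h.mul_left _).mul_right _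

lemma mul_ringInverse_sq_eq (hp : p * p = 0) (ha : IsUnit a) (hb : IsUnit b) (h : p ∣ a + b) :
    p * a⁻¹ʳ ^ 2 = p * b⁻¹ʳ ^ 2 := by
  obtain ⟨d, hd⟩ := dvd_ringInverse_add_ringInverse ha hb h
  linear_combination (a⁻¹ʳ - b⁻¹ʳ) * (p * hd + d * hp)

lemma mul_dvd_smul_mul_ringInverse_sub {S : Type*} [Monoid S] [DistribMulAction S R]
    [SMulCommClass S R R] (k : S) (p : R) (ha : IsUnit a) (hb : IsUnit b) (h : q ∣ a + b) :
    p * q ∣ k • (p * a⁻¹ʳ) - -(k • (p * b⁻¹ʳ)) := by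
  obtain ⟨d, hd⟩ := dvd_ringInverse_add_ringInverse ha hb h
  refine ⟨k • d, ?_⟩
  rw [sub_neg_eq_add, ← smul_add, ← mul_add, hd, ← mul_assoc, mul_smul_comm]

lemma dvd_smul_mul_mul {S : Type*} [SMul S R] [SMulCommClass S R R] (k : S) (p a b d : R) :
    p ∣ k • (p * a) * b * d := by
  rw [← mul_smul_comm, mul_assoc, mul_assoc]
  exact dvd_mul_right _ _

lemma add_mul_add_eq_ringInverse_mul {S : Type*} [CommSemiring S] [Algebra S R]
    {c cb f fb F Fb P P' Q Q' : R} (k : S) (hc : c * c = 0) (hcb : cb * cb = 0)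
    (hf : IsUnit f) (hfb : IsUnit fb) (hF : IsUnit F) (hFb : IsUnit Fb)
    (hP : c * cb * P = c * cb * P') (hQ : c * cb * Q = c * cb * Q')
    (h : F + f = k • (cb * Fb⁻¹ʳ) * Fb⁻¹ʳ * P) (hb : Fb + fb = k • (c * F⁻¹ʳ) * F⁻¹ʳ * Q) :
    (F + f) * (Fb + fb)
      = (f * fb)⁻¹ʳ * (-(k • (c * f⁻¹ʳ)) * -(k • (cb * fb⁻¹ʳ))) * (P' * Q') := by
  have F_sq : cb * F⁻¹ʳ ^ 2 = cb * f⁻¹ʳ ^ 2 :=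
    mul_ringInverse_sq_eq hcb hF hf (h ▸ dvd_smul_mul_mul k _ _ _ _)
  have Fb_sq : c * Fb⁻¹ʳ ^ 2 = c * fb⁻¹ʳ ^ 2 :=
    mul_ringInverse_sq_eq hc hFb hfb (hb ▸ dvd_smul_mul_mul k _ _ _ _)
  simp only [Algebra.smul_def] at h hb ⊢
  set κ := algebraMap S R k
  calc (F + f) * (Fb + fb)
    _ = κ ^ 2 * (c * Fb⁻¹ʳ ^ 2) * (cb * F⁻¹ʳ ^ 2) * (P * Q) := by rw [h, hb]; ring
    _ = κ ^ 2 * (c * fb⁻¹ʳ ^ 2) * (cb * f⁻¹ʳ ^ 2) * (P * Q) := by rw [F_sq, Fb_sq]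
    _ = κ ^ 2 * (c * fb⁻¹ʳ ^ 2) * (cb * f⁻¹ʳ ^ 2) * (P' * Q') := by
      linear_combination κ ^ 2 * fb⁻¹ʳ ^ 2 * f⁻¹ʳ ^ 2 * (Q * hP + P' * hQ)
    _ = _ := by rw [Ring.mul_inverse_rev]; ring

end Divisibility

section TwoJet

variable (𝕜 : Type*) {E F : Type*} [NontriviallyNormedField 𝕜] [NormedAddCommGroup E]
  [NormedSpace 𝕜 E] [NormedAddCommGroup F] [NormedSpace 𝕜 F]

/-- The 2-jet of `u` at `x`: the value together with the first and second derivatives. It is the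
data on which a differential operator of order at most two may depend. -/
noncomputable def twoJet (u : E → F) (x : E) : F × (E →L[𝕜] F) × (E →L[𝕜] E →L[𝕜] F) :=
  (u x, fderiv 𝕜 u x, fderiv 𝕜 (fderiv 𝕜 u) x)

variable {𝕜} {u v : E → F}

lemma differentiable_fderiv_of_contDiff_two (hu : ContDiff 𝕜 2 u) :
    Differentiable 𝕜 (fderiv 𝕜 u) :=
  (hu.fderiv_right (m := 1) (by norm_num)).differentiable one_ne_zero

lemma fderiv_fderiv_apply_const (hu : ContDiff 𝕜 2 u) (x w z : E) :
    fderiv 𝕜 (fun y ↦ fderiv 𝕜 u y z) x w = fderiv 𝕜 (fderiv 𝕜 u) x w z := by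
  rw [fderiv_clm_apply (differentiable_fderiv_of_contDiff_two hu x) (by fun_prop)]
  simp

lemma twoJet_sub (hu : ContDiff 𝕜 2 u) (hv : ContDiff 𝕜 2 v) (x : E) :
    twoJet 𝕜 (fun y ↦ u y - v y) x = twoJet 𝕜 u x - twoJet 𝕜 v x := by
  have fderiv_sub_eq : fderiv 𝕜 (fun y ↦ u y - v y) = fun y ↦ fderiv 𝕜 u y - fderiv 𝕜 v y :=
    funext fun y ↦ fderiv_fun_sub (hu.differentiable two_ne_zero y)
      (hv.differentiable two_ne_zero y)
  simp only [twoJet, fderiv_sub_eq, Prod.mk_sub_mk]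
  rw [fderiv_fun_sub (differentiable_fderiv_of_contDiff_two hu x)
    (differentiable_fderiv_of_contDiff_two hv x)]

end TwoJet

section SecondOrder

variable {𝕜 E Λ : Type*} [NontriviallyNormedField 𝕜] [NormedAddCommGroup E] [NormedSpace 𝕜 E]

lemma mul_fderiv_eq_neg_of_mul_eq_zero {R : Type*} [NormedRing R] [NormedAlgebra 𝕜 R]
    {p q : E → R} {x : E} (hp : DifferentiableAt 𝕜 p x) (hq : DifferentiableAt 𝕜 q x)
    (h : ∀ y, p y * q y = 0) (w : E) :
    p x * fderiv 𝕜 q x w = -(fderiv 𝕜 p x w * q x) := by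
  have leibniz := DFunLike.congr_fun (fderiv_fun_mul' hp hq) w
  simp only [h, fderiv_fun_const, Pi.zero_apply, zero_apply, add_apply, smul_apply, smul_eq_mul,
    MulOpposite.smul_eq_mul_unop, MulOpposite.unop_op] at leibniz
  exact eq_neg_of_add_eq_zero_left leibniz.symm

variable [NormedCommRing Λ] [NormedAlgebra 𝕜 Λ]

variable (𝕜) in
/-- `A` is a linear differential operator of order at most two on `Λ`-valued functions: at every
point, `A u` is a `Λ`-linear function of the 2-jet of `u`. Only the action on `C²` functions is
constrained, and the coefficients may depend on the point in an arbitrary way. -/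
def IsSecondOrderDiffOp (A : (E → Λ) → E → Λ) : Prop :=
  ∀ x, ∃ L : (Λ × (E →L[𝕜] Λ) × (E →L[𝕜] E →L[𝕜] Λ)) →ₗ[Λ] Λ,
    ∀ u, ContDiff 𝕜 2 u → A u x = L (twoJet 𝕜 u x)

variable {p q u v : E → Λ} {x : E}

variable [NeZero (2 : 𝕜)]

lemma mul_fderiv_eq_zero_of_dvd (hp : DifferentiableAt 𝕜 p x) (hu : DifferentiableAt 𝕜 u x)
    (hp2 : ∀ y, p y * p y = 0) (h : ∀ y, p y ∣ u y) (w : E) : p x * fderiv 𝕜 u x w = 0 := by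
  have mul_eq_zero (y : E) : p y * u y = 0 := by
    obtain ⟨b, hb⟩ := h y
    rw [hb, ← mul_assoc, hp2, zero_mul]
  have mul_fderiv_self : p x * fderiv 𝕜 p x w = 0 := by
    refine (smul_eq_zero.1 (?_ : (2 : 𝕜) • (p x * fderiv 𝕜 p x w) = 0)).resolve_left two_ne_zero
    rw [two_smul]
    linear_combination mul_fderiv_eq_neg_of_mul_eq_zero hp hp hp2 w
  obtain ⟨b, hb⟩ := h x
  rw [mul_fderiv_eq_neg_of_mul_eq_zero hp hu mul_eq_zero, hb]
  linear_combination -b * mul_fderiv_self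

-- The first derivative of `u` is already annihilated by `p` and by `q` separately, so that one
-- further differentiation leaves it annihilated by `p * q`.
lemma smul_twoJet_eq_zero_of_dvd (hp : Differentiable 𝕜 p) (hq : Differentiable 𝕜 q)
    (hu : ContDiff 𝕜 2 u) (hp2 : ∀ y, p y * p y = 0) (hq2 : ∀ y, q y * q y = 0)
    (h : ∀ y, p y * q y ∣ u y) (x : E) : (p x * q x) • twoJet 𝕜 u x = 0 := by
  have hu1 := hu.differentiable two_ne_zero
  have p_mul_fderiv (y z : E) : p y * fderiv 𝕜 u y z = 0 :=
    mul_fderiv_eq_zero_of_dvd (hp y) (hu1 y) hp2 (fun y ↦ dvd_of_mul_right_dvd (h y)) z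
  have q_mul_fderiv (y z : E) : q y * fderiv 𝕜 u y z = 0 :=
    mul_fderiv_eq_zero_of_dvd (hq y) (hu1 y) hq2 (fun y ↦ dvd_of_mul_left_dvd (h y)) z
  have mul_value : p x * q x * u x = 0 := by
    obtain ⟨b, hb⟩ := h x
    linear_combination p x * q x * hb + q x * q x * b * hp2 x
  have mul_fderiv (z : E) : p x * q x * fderiv 𝕜 u x z = 0 := by
    linear_combination q x * p_mul_fderiv x z
  have mul_fderiv_fderiv (w z : E) : p x * q x * fderiv 𝕜 (fderiv 𝕜 u) x w z = 0 := by
    have leibniz := mul_fderiv_eq_neg_of_mul_eq_zero (hp x)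
      ((differentiable_fderiv_of_contDiff_two hu).clm_apply (differentiable_const z) x)
      (fun y ↦ p_mul_fderiv y z) w
    rw [fderiv_fderiv_apply_const hu] at leibniz
    linear_combination q x * leibniz - fderiv 𝕜 p x w * q_mul_fderiv x z
  ext <;> simp [twoJet, mul_value, mul_fderiv, mul_fderiv_fderiv]

lemma IsSecondOrderDiffOp.mul_map_eq_mul_map {A : (E → Λ) → E → Λ} (hA : IsSecondOrderDiffOp 𝕜 A)
    (hp : Differentiable 𝕜 p) (hq : Differentiable 𝕜 q) (hu : ContDiff 𝕜 2 u)
    (hv : ContDiff 𝕜 2 v) (hp2 : ∀ y, p y * p y = 0) (hq2 : ∀ y, q y * q y = 0)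
    (h : ∀ y, p y * q y ∣ u y - v y) (x : E) :
    p x * q x * A u x = p x * q x * A v x := by
  obtain ⟨L, hL⟩ := hA x
  rw [hL u hu, hL v hv, ← sub_eq_zero, ← mul_sub, ← map_sub, ← twoJet_sub hu hv, ← smul_eq_mul,
    ← map_smul, smul_twoJet_eq_zero_of_dvd hp hq (hu.sub hv) hp2 hq2 h, map_zero]

lemma IsSecondOrderDiffOp.mul_map_smul_mul_ringInverse_eq {A : (E → Λ) → E → Λ}
    (hA : IsSecondOrderDiffOp 𝕜 A) {a b : E → Λ} (k : 𝕜)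
    (hp : ContDiff 𝕜 2 p) (hq : Differentiable 𝕜 q) (ha : ContDiff 𝕜 2 a) (hb : ContDiff 𝕜 2 b)
    (hp2 : ∀ y, p y * p y = 0) (hq2 : ∀ y, q y * q y = 0)
    (haU : ∀ y, IsUnit (a y)) (hbU : ∀ y, IsUnit (b y)) (h : ∀ y, q y ∣ a y + b y) (x : E) :
    p x * q x * A (fun y ↦ k • (p y * (a y)⁻¹ʳ)) x
      = p x * q x * A (fun y ↦ -(k • (p y * (b y)⁻¹ʳ))) x :=
  hA.mul_map_eq_mul_map (hp.differentiable two_ne_zero) hq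
    (contDiff_smul_mul_ringInverse (n := 2) k hp ha haU)
    (contDiff_smul_mul_ringInverse (n := 2) k hp hb hbU).neg hp2 hq2
    (fun y ↦ mul_dvd_smul_mul_ringInverse_sub k (p y) (haU y) (hbU y) (h y)) x

theorem Fplusf_product_general {A Ab : (E → Λ) → E → Λ} (hA : IsSecondOrderDiffOp 𝕜 A)
    (hAb : IsSecondOrderDiffOp 𝕜 Ab) {c cb B Bb f fb F Fb X Xb Y Yb : E → Λ}
    (hc : ContDiff 𝕜 2 c) (hcb : ContDiff 𝕜 2 cb) (hf : ContDiff 𝕜 2 f) (hfb : ContDiff 𝕜 2 fb)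
    (hF : ContDiff 𝕜 2 F) (hFb : ContDiff 𝕜 2 Fb)
    (hc2 : ∀ x, c x * c x = 0) (hcb2 : ∀ x, cb x * cb x = 0)
    (hfU : ∀ x, IsUnit (f x)) (hfbU : ∀ x, IsUnit (fb x))
    (hFU : ∀ x, IsUnit (F x)) (hFbU : ∀ x, IsUnit (Fb x)) (k : 𝕜)
    (hX : ∀ x, X x = k • (c x * (F x)⁻¹ʳ)) (hXb : ∀ x, Xb x = k • (cb x * (Fb x)⁻¹ʳ))
    (hY : ∀ x, Y x = -(k • (c x * (f x)⁻¹ʳ))) (hYb : ∀ x, Yb x = -(k • (cb x * (fb x)⁻¹ʳ)))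
    (heom : ∀ x, F x + f x = Xb x * (Fb x)⁻¹ʳ * (A X x + B x))
    (heomb : ∀ x, Fb x + fb x = X x * (F x)⁻¹ʳ * (Ab Xb x + Bb x)) (x : E) :
    (F x + f x) * (Fb x + fb x)
        = (f x * fb x)⁻¹ʳ * (Y x * Yb x) * ((A Y x + B x) * (Ab Yb x + Bb x))
      ∧ (F x + f x) * (Fb x + fb x)
        = f x * fb x * ((f x * fb x)⁻¹ʳ * (Yb x * (A Y x + B x))) *
            ((f x * fb x)⁻¹ʳ * (Y x * (Ab Yb x + Bb x))) := by
  have cb_dvd (y : E) : cb y ∣ F y + f y := by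
    rw [heom, hXb]
    exact dvd_smul_mul_mul k _ _ _ _
  have c_dvd (y : E) : c y ∣ Fb y + fb y := by
    rw [heomb, hX]
    exact dvd_smul_mul_mul k _ _ _ _
  have A_eq : c x * cb x * A X x = c x * cb x * A Y x := by
    rw [funext hX, funext hY]
    exact hA.mul_map_smul_mul_ringInverse_eq k hc (hcb.differentiable two_ne_zero) hF hf hc2 hcb2
      hFU hfU cb_dvd x
  have Ab_eq : cb x * c x * Ab Xb x = cb x * c x * Ab Yb x := by
    rw [funext hXb, funext hYb]
    exact hAb.mul_map_smul_mul_ringInverse_eq k hcb (hc.differentiable two_ne_zero) hFb hfb hcb2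
      hc2 hFbU hfbU c_dvd x
  have product : (F x + f x) * (Fb x + fb x)
      = (f x * fb x)⁻¹ʳ * (Y x * Yb x) * ((A Y x + B x) * (Ab Yb x + Bb x)) := by
    rw [hY, hYb]
    exact add_mul_add_eq_ringInverse_mul k (hc2 x) (hcb2 x) (hfU x) (hfbU x) (hFU x) (hFbU x)
      (by rw [mul_add, mul_add, A_eq]) (by rw [mul_comm (c x), mul_add, mul_add, Ab_eq])
      (hXb x ▸ heom x) (hX x ▸ heomb x)
  have mul_inverse_cancel := Ring.mul_inverse_cancel _ ((hfU x).mul (hfbU x))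
  refine ⟨product, ?_⟩
  linear_combination product - (f x * fb x)⁻¹ʳ * (Y x * Yb x) *
    ((A Y x + B x) * (Ab Yb x + Bb x)) * mul_inverse_cancel

end SecondOrder

section Kinetic

variable {Λ : Type*} [NormedCommRing Λ] [NormedAlgebra ℂ Λ]
  {e : (Fin 4 → ℝ) → ℝ} {g : (Fin 4 → ℝ) → Fin 4 → Fin 4 → ℝ}

lemma pd_smul_sum_smul_pd {F : Type*} [NormedAddCommGroup F] [NormedSpace ℝ F]
    {u : (Fin 4 → ℝ) → F} (he : Differentiable ℝ e) (hg : Differentiable ℝ g)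
    (hu : ContDiff ℝ 2 u) (μ : Fin 4) (x : Fin 4 → ℝ) :
    pd μ (fun y ↦ e y • ∑ ν, g y μ ν • pd ν u y) x
      = ∑ ν, ((e x * g x μ ν) • pd μ (pd ν u) x + pd μ (fun y ↦ e y * g y μ ν) x • pd ν u x) := by
  have hcoeff (ν : Fin 4) : Differentiable ℝ fun y ↦ e y * g y μ ν := by fun_prop
  have hpd (ν : Fin 4) : Differentiable ℝ (pd ν u) :=
    (differentiable_fderiv_of_contDiff_two hu).clm_apply (differentiable_const _)
  have hdistrib : (fun y ↦ e y • ∑ ν, g y μ ν • pd ν u y)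
      = fun y ↦ ∑ ν, (e y * g y μ ν) • pd ν u y := by
    simp only [Finset.smul_sum, smul_smul]
  rw [hdistrib, pd, fderiv_fun_sum fun ν _ ↦ (hcoeff ν x).fun_smul (hpd ν x), sum_apply]
  refine Finset.sum_congr rfl fun ν _ ↦ ?_
  rw [fderiv_fun_smul (hcoeff ν x) (hpd ν x)]
  rfl

lemma isSecondOrderDiffOp_Aop (he : Differentiable ℝ e) (hg : Differentiable ℝ g)
    (t : (Fin 4 → ℝ) → Fin 4 → ℝ) (r : (Fin 4 → ℝ) → ℝ) :
    IsSecondOrderDiffOp ℝ (Aop (Λ := Λ) e g t r) := by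
  intro x
  let J := Λ × ((Fin 4 → ℝ) →L[ℝ] Λ) × ((Fin 4 → ℝ) →L[ℝ] (Fin 4 → ℝ) →L[ℝ] Λ)
  let val : J →ₗ[Λ] Λ := LinearMap.fst _ _ _
  let D₁ (ν : Fin 4) : J →ₗ[Λ] Λ :=
    { toFun j := j.2.1 (Pi.single ν 1), map_add' _ _ := rfl, map_smul' _ _ := rfl }
  let D₂ (μ ν : Fin 4) : J →ₗ[Λ] Λ :=
    { toFun j := j.2.2 (Pi.single μ 1) (Pi.single ν 1), map_add' _ _ := rfl, map_smul' _ _ := rfl }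
  refine ⟨(e x)⁻¹ • ∑ μ, ∑ ν, ((e x * g x μ ν) • D₂ μ ν + pd μ (fun y ↦ e y * g y μ ν) x • D₁ ν)
      + Complex.I • ∑ μ, t x μ • D₁ μ
      + ((2 : ℝ)⁻¹ * (e x)⁻¹ * ∑ μ, pd μ (fun y ↦ e y * t y μ) x) • Complex.I • val
      + r x • val, fun u hu ↦ ?_⟩
  have second (μ ν : Fin 4) : pd μ (pd ν u) x = D₂ μ ν (twoJet ℝ u x) :=
    fderiv_fderiv_apply_const hu x _ _
  have first (ν : Fin 4) : pd ν u x = D₁ ν (twoJet ℝ u x) := rfl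
  have value : u x = val (twoJet ℝ u x) := rfl
  simp only [Aop, pd_smul_sum_smul_pd he hg hu, second, first, value]
  simp only [LinearMap.add_apply, LinearMap.smul_apply, LinearMap.sum_apply]
  rfl

end Kinetic

/-- **Eqs. (4.12)/(4.14).** In the product
`(F+f)(F̄+f̄) = (X X̄/(F F̄)) (A X + B)(Ā X̄ + B̄)` obtained from the equations of
motion, only the lowest-order values `X → Y`, `F → −f` contribute:
`(F+f)(F̄+f̄) = (f f̄)⁻¹ Y Ȳ (A Y + B)(Ā Ȳ + B̄) = f f̄ 𝒜 𝒜̄`. -/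
theorem Fplusf_product
    {Λ : Type*} [NormedCommRing Λ] [NormedAlgebra ℂ Λ]
    (c cb B Bb f fb F Fb : (Fin 4 → ℝ) → Λ)
    (t : (Fin 4 → ℝ) → Fin 4 → ℝ) (r : (Fin 4 → ℝ) → ℝ)
    (g : (Fin 4 → ℝ) → Fin 4 → Fin 4 → ℝ) (e : (Fin 4 → ℝ) → ℝ)
    -- smoothness of all data
    (hc : ContDiff ℝ (⊤ : ℕ∞) c) (hcb : ContDiff ℝ (⊤ : ℕ∞) cb)
    (hB : ContDiff ℝ (⊤ : ℕ∞) B) (hBb : ContDiff ℝ (⊤ : ℕ∞) Bb)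
    (hf : ContDiff ℝ (⊤ : ℕ∞) f) (hfb : ContDiff ℝ (⊤ : ℕ∞) fb)
    (hF : ContDiff ℝ (⊤ : ℕ∞) F) (hFb : ContDiff ℝ (⊤ : ℕ∞) Fb)
    (ht : ContDiff ℝ (⊤ : ℕ∞) t) (hr : ContDiff ℝ (⊤ : ℕ∞) r)
    (hg : ContDiff ℝ (⊤ : ℕ∞) g) (hgsym : ∀ x μ ν, g x μ ν = g x ν μ)
    (he : ContDiff ℝ (⊤ : ℕ∞) e) (he0 : ∀ x, e x ≠ 0)
    -- nilpotency of the fermion bilinears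
    (hc2 : ∀ x, c x * c x = 0) (hcb2 : ∀ x, cb x * cb x = 0)
    -- invertibility
    (hfU : ∀ x, IsUnit (f x)) (hfbU : ∀ x, IsUnit (fb x))
    (hFU : ∀ x, IsUnit (F x)) (hFbU : ∀ x, IsUnit (Fb x))
    -- the constrained scalars X = c/(2F), X̄ = c̄/(2F̄), Y = -c/(2f), Ȳ = -c̄/(2f̄)
    (X Xb Y Yb : (Fin 4 → ℝ) → Λ)
    (hX : ∀ x, X x = (2 : ℝ)⁻¹ • (c x * Ring.inverse (F x)))
    (hXb : ∀ x, Xb x = (2 : ℝ)⁻¹ • (cb x * Ring.inverse (Fb x)))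
    (hY : ∀ x, Y x = -((2 : ℝ)⁻¹ • (c x * Ring.inverse (f x))))
    (hYb : ∀ x, Yb x = -((2 : ℝ)⁻¹ • (cb x * Ring.inverse (fb x))))
    -- the auxiliary-field equations of motion (4.7):
    -- F + f = X̄ F̄⁻¹ (A X + B) and F̄ + f̄ = X F⁻¹ (Ā X̄ + B̄)
    (heom : ∀ x, F x + f x = Xb x * Ring.inverse (Fb x) * (Aop e g t r X x + B x))
    (heomb : ∀ x, Fb x + fb x =
      X x * Ring.inverse (F x) * (Aop e g (fun y μ => -(t y μ)) r Xb x + Bb x))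
    :
    ∀ x, (F x + f x) * (Fb x + fb x)
        = Ring.inverse (f x * fb x) * (Y x * Yb x) *
            ((Aop e g t r Y x + B x) *
              (Aop e g (fun y μ => -(t y μ)) r Yb x + Bb x))
      ∧ (F x + f x) * (Fb x + fb x)
        = f x * fb x *
            (Ring.inverse (f x * fb x) * (Yb x * (Aop e g t r Y x + B x))) *
            (Ring.inverse (f x * fb x) *
              (Y x * (Aop e g (fun y μ => -(t y μ)) r Yb x + Bb x))) := by
  have C2 {u : (Fin 4 → ℝ) → Λ} (hu : ContDiff ℝ (⊤ : ℕ∞) u) : ContDiff ℝ 2 u :=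
    contDiff_infty.1 hu 2
  have hA (s : (Fin 4 → ℝ) → Fin 4 → ℝ) := isSecondOrderDiffOp_Aop (Λ := Λ)
    (he.differentiable (by simp)) (hg.differentiable (by simp)) s r
  exact Fplusf_product_general (hA t) (hA _) (C2 hc) (C2 hcb) (C2 hf) (C2 hfb) (C2 hF) (C2 hFb)
    hc2 hcb2 hfU hfbU hFU hFbU _ hX hXb hY hYb heom heomb
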